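/- There exist a natural number n and a simple (non-weak) pseudoline arrangement (L₁, …, Lₙ) in ℝ² that is not realizable by circular arcs: there is no open disk D ⊆ ℝ², no family γ₁, …, γₙ of subsets of ℝ² in which each γᵢ is either a circle or a straight line, and no homeomorphism h from ℝ² onto D with h(Lᵢ) = γᵢ ∩ D for every i. -/

import Mathlib

open Set

/-- The Euclidean plane. -/
abbrev Plane := EuclideanSpace ℝ (Fin 2)

/-- A straight line in the plane. -/
def IsLine (S : Set Plane) : Prop :=
  ∃ a u : Plane, u ≠ 0 ∧ S = {p | ∃ t : ℝ, p = a + t • u}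

/-- A pseudoline: image of a straight line under a self-homeomorphism of the plane. -/
def IsPseudoline (L : Set Plane) : Prop :=
  ∃ (h : Plane ≃ₜ Plane) (ℓ : Set Plane), IsLine ℓ ∧ L = h '' ℓ

/-- Two curves cross at `p`: `p` lies on both, and each of them meets every
connected component of the complement of the other. -/
def CrossAt (L M : Set Plane) (p : Plane) : Prop :=
  p ∈ L ∩ M ∧
  (∀ x ∈ Mᶜ, (L ∩ connectedComponentIn Mᶜ x).Nonempty) ∧
  (∀ x ∈ Lᶜ, (M ∩ connectedComponentIn Lᶜ x).Nonempty)

/-- A weak pseudoline arrangement: pairwise distinct pseudolines, any two of which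
intersect in at most one point, and cross wherever they intersect. -/
def IsWeakArrangement {n : ℕ} (L : Fin n → Set Plane) : Prop :=
  Function.Injective L ∧
  (∀ i, IsPseudoline (L i)) ∧
  (∀ i j, i ≠ j → (L i ∩ L j).Subsingleton) ∧
  (∀ i j, i ≠ j → ∀ p ∈ L i ∩ L j, CrossAt (L i) (L j) p)

/-- A (non-weak) pseudoline arrangement: a weak arrangement in which any two
pseudolines intersect (in exactly one point, where they cross). -/
def IsArrangement {n : ℕ} (L : Fin n → Set Plane) : Prop :=
  IsWeakArrangement L ∧ ∀ i j, i ≠ j → (L i ∩ L j).Nonempty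

/-- Simplicity: no point lies on three distinct pseudolines of the family. -/
def IsSimple {n : ℕ} (L : Fin n → Set Plane) : Prop :=
  ∀ (p : Plane) (i j k : Fin n),
    p ∈ L i → p ∈ L j → p ∈ L k → i = j ∨ i = k ∨ j = k

/-- Outerplanarity: every intersection point of two pseudolines of the family lies
in the closure of some unbounded connected component of the complement of the union. -/
def IsOuterplanar {n : ℕ} (L : Fin n → Set Plane) : Prop :=
  ∀ i j, i ≠ j → ∀ p ∈ L i ∩ L j,
    ∃ x ∈ (⋃ k, L k)ᶜ,
      ¬ Bornology.IsBounded (connectedComponentIn (⋃ k, L k)ᶜ x) ∧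
      p ∈ closure (connectedComponentIn (⋃ k, L k)ᶜ x)

/-- A circle in the plane. -/
def IsCircle (S : Set Plane) : Prop :=
  ∃ (c : Plane) (r : ℝ), 0 < r ∧ S = Metric.sphere c r


/-- Sign attached to a boolean. -/
noncomputable def sg (b : Bool) : ℝ := if b then 1 else -1

lemma sg_mul_self (b : Bool) : sg b * sg b = 1 := by cases b <;> simp [sg]

lemma eval_hasDerivAt {V : Type*} [DecidableEq V] (x : V → ℝ) (v : V) (p : MvPolynomial V ℝ) :
    HasDerivAt (fun t => MvPolynomial.eval (Function.update x v t) p)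
      (MvPolynomial.eval x (MvPolynomial.pderiv v p)) (x v) := by
  induction p using MvPolynomial.induction_on with
  | C a => simpa using hasDerivAt_const (x v) a
  | add p q hp hq =>
    rw [map_add, map_add]
    refine (hp.add hq).congr_of_eventuallyEq (Filter.Eventually.of_forall fun t => ?_)
    simp
  | mul_X p w hp =>
    have hX : HasDerivAt (fun t => MvPolynomial.eval (Function.update x v t) (MvPolynomial.X w))
        (MvPolynomial.eval x (MvPolynomial.pderiv v (MvPolynomial.X w : MvPolynomial V ℝ))) (x v) := by
      by_cases h : w = v
      · subst h
        simp only [MvPolynomial.eval_X, Function.update_self, MvPolynomial.pderiv_X_self, map_one]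
        exact hasDerivAt_id' (x w)
      · simpa [h, MvPolynomial.pderiv_X_of_ne h] using hasDerivAt_const (x v) (x w)
    have := hp.mul hX
    simp only [Function.update_eq_self] at this
    rw [Derivation.leibniz]
    have e : MvPolynomial.eval x (p • (MvPolynomial.pderiv v) (MvPolynomial.X w : MvPolynomial V ℝ) +
        (MvPolynomial.X w : MvPolynomial V ℝ) • (MvPolynomial.pderiv v) p) =
      (MvPolynomial.eval x) ((MvPolynomial.pderiv v) p) * (MvPolynomial.eval x) (MvPolynomial.X w) +
      (MvPolynomial.eval x) p * (MvPolynomial.eval x)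
        ((MvPolynomial.pderiv v) (MvPolynomial.X w : MvPolynomial V ℝ)) := by
      simp only [smul_eq_mul, map_add, map_mul]; ring
    rw [e]
    refine this.congr_of_eventuallyEq (Filter.Eventually.of_forall fun t => ?_)
    simp

lemma continuous_mvEval {V : Type*} (p : MvPolynomial V ℝ) :
    Continuous (fun x : V → ℝ => MvPolynomial.eval x p) := MvPolynomial.continuous_eval p

lemma totalDegree_pderiv_le' {V : Type*} (v : V) (p : MvPolynomial V ℝ) :
    (MvPolynomial.pderiv v p).totalDegree ≤ p.totalDegree := by
  classical
  rw [MvPolynomial.totalDegree_eq, Finset.sup_le_iff]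
  intro m hm
  rw [MvPolynomial.mem_support_iff, MvPolynomial.coeff_pderiv] at hm
  have h1 : m + Finsupp.single v 1 ∈ p.support := by
    rw [MvPolynomial.mem_support_iff]
    intro h; simp [h] at hm
  have := MvPolynomial.le_totalDegree h1
  rw [Finsupp.sum_add_index' (by simp) (by simp)] at this
  rw [Finsupp.card_toMultiset]
  exact le_trans (Nat.le_add_right (m.sum fun _ e => e) _) this

/-- Dimension counting: polynomial relation. -/
lemma exists_relation {V S : Type*} [Fintype V] [Fintype S] (h : S → MvPolynomial V ℝ)
    (g : V → MvPolynomial V ℝ) (D : ℕ) (hg : ∀ v, (g v).totalDegree ≤ D)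
    (hS : (Fintype.card V * D + 1) ^ Fintype.card V < Fintype.card S) :
    ∃ R : S → MvPolynomial V ℝ, R ≠ 0 ∧
      ∀ x, ∑ s, MvPolynomial.eval x (h s) *
        MvPolynomial.eval (fun v => MvPolynomial.eval x (g v)) (R s) = 0 := by
  classical
  set k := Fintype.card V with hk
  set H := Finset.univ.sup (fun s => (h s).totalDegree) with hH
  set n := H + k * (H * D) with hn
  let q : S × (V → Fin (H + 1)) → MvPolynomial V ℝ :=
    fun i => h i.1 * ∏ v, g v ^ (i.2 v : ℕ)
  have hq : ∀ i, (q i).totalDegree ≤ n := by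
    intro i
    refine (MvPolynomial.totalDegree_mul _ _).trans (add_le_add ?_ ?_)
    · exact Finset.le_sup (f := fun s => (h s).totalDegree) (Finset.mem_univ i.1)
    · refine (MvPolynomial.totalDegree_finsetProd _ _).trans ?_
      refine (Finset.sum_le_card_nsmul _ _ (H * D) ?_).trans (by simp [hk])
      intro v _
      refine (MvPolynomial.totalDegree_pow _ _).trans ?_
      exact Nat.mul_le_mul (Nat.lt_succ_iff.mp (i.2 v).2) (hg v)
  let Φ : (S × (V → Fin (H + 1)) → ℝ) →ₗ[ℝ] ((V → Fin (n + 1)) → ℝ) :=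
    { toFun := fun c m => ∑ i, c i *
        MvPolynomial.coeff (Finsupp.equivFunOnFinite.symm (fun v => (m v : ℕ))) (q i)
      map_add' := by
        intro a b; funext m; simp [add_mul, Finset.sum_add_distrib]
      map_smul' := by
        intro a b; funext m; simp [Finset.mul_sum, mul_assoc] }
  have hker : LinearMap.ker Φ ≠ ⊥ := by
    apply LinearMap.ker_ne_bot_of_finrank_lt
    simp only [Module.finrank_fintype_fun_eq_card, Fintype.card_fun, Fintype.card_fin,
      Fintype.card_prod]
    calc (n + 1) ^ Fintype.card V ≤ ((k * D + 1) * (H + 1)) ^ k := by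
          apply Nat.pow_le_pow_left
          rw [hn]; nlinarith [Nat.zero_le (k * D)]
      _ = (k * D + 1) ^ k * (H + 1) ^ k := mul_pow _ _ _
      _ < Fintype.card S * (H + 1) ^ Fintype.card V :=
          Nat.mul_lt_mul_of_pos_right hS (by positivity)
  obtain ⟨c, hc, hc0⟩ := Submodule.exists_mem_ne_zero_of_ne_bot hker
  have hpoly : ∑ i, MvPolynomial.C (c i) * q i = 0 := by
    ext m
    rw [MvPolynomial.coeff_sum, MvPolynomial.coeff_zero]
    simp only [MvPolynomial.coeff_C_mul]
    by_cases hm : ∀ v, m v < n + 1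
    · have := congrFun (LinearMap.mem_ker.mp hc) (fun v => ⟨m v, hm v⟩)
      simp only [Φ, LinearMap.coe_mk, AddHom.coe_mk, Pi.zero_apply] at this
      have e : Finsupp.equivFunOnFinite.symm (fun v => m v) = m := by ext v; simp
      rwa [e] at this
    · push Not at hm
      obtain ⟨v, hv⟩ := hm
      apply Finset.sum_eq_zero
      intro i _
      rw [MvPolynomial.coeff_eq_zero_of_totalDegree_lt, mul_zero]
      have h1 : m v ≤ ∑ w ∈ m.support, m w := by
        apply Finset.single_le_sum (f := fun w => m w) (by simp)
        simp; omega
      have := hq i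
      omega
  refine ⟨fun s => ∑ β : V → Fin (H + 1), MvPolynomial.monomial
    (Finsupp.equivFunOnFinite.symm (fun v => (β v : ℕ))) (c (s, β)), ?_, ?_⟩
  · intro h0
    apply hc0
    funext ⟨s, β⟩
    have := congrArg (MvPolynomial.coeff
      (Finsupp.equivFunOnFinite.symm (fun v => (β v : ℕ)))) (congrFun h0 s)
    simp only [MvPolynomial.coeff_sum, MvPolynomial.coeff_monomial, Pi.zero_apply,
      MvPolynomial.coeff_zero] at this
    rw [Finset.sum_eq_single β] at this
    · simpa using this
    · intro b _ hb
      rw [if_neg]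
      intro he
      apply hb
      funext v
      have := DFunLike.congr_fun he v
      exact Fin.ext (by simpa using this)
    · simp
  · intro x
    have := congrArg (MvPolynomial.eval x) hpoly
    simp only [map_sum, map_mul, MvPolynomial.eval_C, map_zero, q, Fintype.sum_prod_type,
      map_prod, map_pow] at this
    rw [← this]
    apply Finset.sum_congr rfl
    intro s _
    rw [map_sum, Finset.mul_sum]
    apply Finset.sum_congr rfl
    intro β _
    rw [MvPolynomial.eval_monomial, Finsupp.prod_fintype _ _ (by simp)]
    simp only [Finsupp.equivFunOnFinite_symm_apply_apply]
    ring

/-- Near every regular sign cell there are preimages of all small vectors under the gradient. -/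
lemma exists_critical {V I : Type*} [Fintype V] [Fintype I] (F : I → MvPolynomial V ℝ)
    (w : (I → Bool) → V → ℝ)
    (hw : ∀ s i, 0 < sg (s i) * MvPolynomial.eval (w s) (F i)) :
    ∃ (P : MvPolynomial V ℝ) (K : (I → Bool) → Set (V → ℝ)) (δ : ℝ),
      P.totalDegree ≤ (∑ i, (F i).totalDegree) + 2 ∧
      (∀ s, IsCompact (K s)) ∧
      (∀ s, ∀ x ∈ K s, ∀ i, 0 < sg (s i) * MvPolynomial.eval x (F i)) ∧
      0 < δ ∧
      ∀ y : V → ℝ, (∀ v, |y v| < δ) → ∀ s, ∃ x ∈ K s,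
        ∀ v, MvPolynomial.eval x (MvPolynomial.pderiv v P) = y v := by
  classical
  -- the radius
  obtain ⟨R, hR⟩ : ∃ R : ℝ, ∀ s, ∑ v, (w s v) ^ 2 < R := by
    refine ⟨(∑ s, ∑ v, (w s v) ^ 2) + 1, fun s => ?_⟩
    have : ∑ v, (w s v) ^ 2 ≤ ∑ s, ∑ v, (w s v) ^ 2 :=
      Finset.single_le_sum (f := fun s => ∑ v, (w s v) ^ 2)
        (fun s _ => Finset.sum_nonneg fun v _ => sq_nonneg _) (Finset.mem_univ s)
    linarith
  set B : MvPolynomial V ℝ := MvPolynomial.C R - ∑ v, MvPolynomial.X v ^ 2 with hB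
  have hBe : ∀ x, MvPolynomial.eval x B = R - ∑ v, x v ^ 2 := by intro x; simp [hB]
  set P : MvPolynomial V ℝ := (∏ i, F i) * B with hP
  have hPe : ∀ x, MvPolynomial.eval x P =
      (∏ i, MvPolynomial.eval x (F i)) * (R - ∑ v, x v ^ 2) := by
    intro x; rw [hP, map_mul, hBe, map_prod]
  -- global sign
  set σ : (I → Bool) → ℝ := fun s => ∏ i, sg (s i) with hσ
  have hσ2 : ∀ s, σ s * σ s = 1 := by
    intro s; rw [hσ]; simp only [← Finset.prod_mul_distrib, sg_mul_self, Finset.prod_const_one]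
  have hσP : ∀ s x, σ s * MvPolynomial.eval x P =
      (∏ i, sg (s i) * MvPolynomial.eval x (F i)) * (R - ∑ v, x v ^ 2) := by
    intro s x; rw [hPe, Finset.prod_mul_distrib]; ring
  set K0 : (I → Bool) → Set (V → ℝ) := fun s =>
    {x | (∀ i, 0 ≤ sg (s i) * MvPolynomial.eval x (F i)) ∧ ∑ v, x v ^ 2 ≤ R} with hK0
  have hK0c : ∀ s, IsCompact (K0 s) := by
    intro s
    have hcl : IsClosed (K0 s) := by
      have : K0 s = (⋂ i, {x | 0 ≤ sg (s i) * MvPolynomial.eval x (F i)}) ∩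
          {x | ∑ v, x v ^ 2 ≤ R} := by
        ext x; simp [hK0]
      rw [this]
      refine IsClosed.inter (isClosed_iInter fun i => ?_) ?_
      · exact isClosed_le continuous_const (continuous_const.mul (continuous_mvEval _))
      · exact isClosed_le (by fun_prop) continuous_const
    refine IsCompact.of_isClosed_subset
      (isCompact_univ_pi (fun _ : V => isCompact_Icc (a := -(R + 1)) (b := R + 1))) hcl ?_
    rintro x ⟨-, hx⟩ v -
    have h1 : x v ^ 2 ≤ R := le_trans
      (Finset.single_le_sum (f := fun v => x v ^ 2) (fun v _ => sq_nonneg _)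
        (Finset.mem_univ v)) hx
    constructor <;> nlinarith
  have hv : ∀ s, 0 < σ s * MvPolynomial.eval (w s) P := by
    intro s
    rw [hσP]
    exact mul_pos (Finset.prod_pos fun i _ => hw s i) (by linarith [hR s])
  obtain ⟨ε, hε, hεv⟩ : ∃ ε > 0, ∀ s, ε ≤ σ s * MvPolynomial.eval (w s) P := by
    obtain ⟨s0, hs0⟩ := Finite.exists_min (fun s => σ s * MvPolynomial.eval (w s) P)
    exact ⟨_, hv s0, hs0⟩
  set K : (I → Bool) → Set (V → ℝ) := fun s =>
    K0 s ∩ {x | ε / 2 ≤ σ s * MvPolynomial.eval x P} with hK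
  have hKpos : ∀ s, ∀ x ∈ K s, (∀ i, 0 < sg (s i) * MvPolynomial.eval x (F i)) ∧
      ∑ v, x v ^ 2 < R := by
    rintro s x ⟨⟨h1, h2⟩, h3⟩
    have h3' : 0 < σ s * MvPolynomial.eval x P := lt_of_lt_of_le (by positivity) h3
    rw [hσP] at h3'
    constructor
    · intro i
      refine lt_of_le_of_ne (h1 i) fun h0 => ?_
      rw [Finset.prod_eq_zero (Finset.mem_univ i) h0.symm] at h3'
      simp at h3'
    · refine lt_of_le_of_ne h2 fun h0 => ?_
      rw [h0] at h3'; simp at h3'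
  -- bound of the linear forms
  set δ : ℝ := ε / (4 * ((Fintype.card V : ℝ) * (R + 1) + 1)) with hδ
  have hRpos : 0 ≤ R := by
    have := hR (fun _ => true)
    have h2 : 0 ≤ ∑ v, (w (fun _ => true) v) ^ 2 := Finset.sum_nonneg fun v _ => sq_nonneg _
    linarith
  have hden : 0 < 4 * ((Fintype.card V : ℝ) * (R + 1) + 1) := by positivity
  have hδ0 : 0 < δ := by positivity
  refine ⟨P, K, δ, ?_, ?_, fun s x hx => (hKpos s x hx).1, hδ0, ?_⟩
  · refine (MvPolynomial.totalDegree_mul _ _).trans (add_le_add ?_ ?_)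
    · exact MvPolynomial.totalDegree_finsetProd _ _
    · refine (MvPolynomial.totalDegree_sub _ _).trans (max_le (by simp) ?_)
      apply MvPolynomial.totalDegree_finsetSum_le
      intro v _
      simp
  · intro s
    exact (hK0c s).inter_right
      (isClosed_le continuous_const (continuous_const.mul (continuous_mvEval _)))
  · intro y hy s
    have hlin : ∀ x ∈ K0 s, |∑ v, y v * x v| ≤ ε / 4 := by
      rintro x ⟨-, hx⟩
      have hxv : ∀ v, |x v| ≤ R + 1 := by
        intro v
        have h1 : x v ^ 2 ≤ R := le_trans
          (Finset.single_le_sum (f := fun v => x v ^ 2) (fun v _ => sq_nonneg _)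
            (Finset.mem_univ v)) hx
        rw [abs_le]; constructor <;> nlinarith
      calc |∑ v, y v * x v| ≤ ∑ v, |y v * x v| := Finset.abs_sum_le_sum_abs _ _
        _ ≤ ∑ v : V, δ * (R + 1) := by
            apply Finset.sum_le_sum
            intro v _
            rw [abs_mul]
            exact mul_le_mul (hy v).le (hxv v) (abs_nonneg _) hδ0.le
        _ = Fintype.card V * (R + 1) * δ := by simp; ring
        _ ≤ ((Fintype.card V : ℝ) * (R + 1) + 1) * δ := by nlinarith
        _ = ε / 4 := by rw [hδ]; field_simp
    set Q : MvPolynomial V ℝ := P - ∑ v, MvPolynomial.C (y v) * MvPolynomial.X v with hQ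
    have hQe : ∀ x, MvPolynomial.eval x Q = MvPolynomial.eval x P - ∑ v, y v * x v := by
      intro x; simp [hQ]
    have hwK : w s ∈ K0 s := ⟨fun i => (hw s i).le, (hR s).le⟩
    obtain ⟨x, hx, hmax⟩ := (hK0c s).exists_isMaxOn ⟨w s, hwK⟩
      (f := fun x => σ s * MvPolynomial.eval x Q)
      (continuous_const.mul (continuous_mvEval _)).continuousOn
    have habs : |σ s| = 1 := by
      have := hσ2 s
      rw [← abs_mul_abs_self] at this
      nlinarith [abs_nonneg (σ s)]
    have hsl : ∀ x ∈ K0 s, |σ s * ∑ v, y v * x v| ≤ ε / 4 := by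
      intro x hx; rw [abs_mul, habs, one_mul]; exact hlin x hx
    have hxK : x ∈ K s := by
      refine ⟨hx, ?_⟩
      have h1 := hmax hwK
      simp only [Set.mem_ofPred_eq, hQe, mul_sub] at h1
      have h2 := abs_le.mp (hsl x hx)
      have h3 := abs_le.mp (hsl _ hwK)
      have h4 := hεv s
      simp only [Set.mem_ofPred_eq]
      linarith [h2.1, h2.2, h3.1, h3.2]
    refine ⟨x, hxK, fun v => ?_⟩
    obtain ⟨hx1, hx2⟩ := hKpos s x hxK
    have hd := (eval_hasDerivAt x v Q).const_mul (σ s)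
    have hloc : IsLocalMax (fun t => σ s * MvPolynomial.eval (Function.update x v t) Q) (x v) := by
      have hcont : Continuous (fun t : ℝ => Function.update x v t) :=
        continuous_const.update v continuous_id
      have hopen : IsOpen {z : V → ℝ | (∀ i, 0 < sg (s i) * MvPolynomial.eval z (F i)) ∧
          ∑ v, z v ^ 2 < R} := by
        have : {z : V → ℝ | (∀ i, 0 < sg (s i) * MvPolynomial.eval z (F i)) ∧
          ∑ v, z v ^ 2 < R} = (⋂ i, {z | 0 < sg (s i) * MvPolynomial.eval z (F i)}) ∩
          {z | ∑ v, z v ^ 2 < R} := by ext z; simp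
        rw [this]
        refine IsOpen.inter (isOpen_iInter_of_finite fun i => ?_) ?_
        · exact isOpen_lt continuous_const (continuous_const.mul (continuous_mvEval _))
        · exact isOpen_lt (by fun_prop) continuous_const
      have hmem : ∀ᶠ t in nhds (x v), Function.update x v t ∈
          {z : V → ℝ | (∀ i, 0 < sg (s i) * MvPolynomial.eval z (F i)) ∧ ∑ v, z v ^ 2 < R} := by
        apply hcont.continuousAt.eventually_mem
        rw [Function.update_eq_self]
        exact hopen.mem_nhds ⟨hx1, hx2⟩
      filter_upwards [hmem] with t ht
      rw [Function.update_eq_self]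
      exact hmax ⟨fun i => (ht.1 i).le, ht.2.le⟩
    have h0 := hloc.hasDerivAt_eq_zero hd
    have hσ0 : σ s ≠ 0 := by intro h; have := hσ2 s; rw [h] at this; simp at this
    have h1 := (mul_eq_zero.mp h0).resolve_left hσ0
    have h2 : MvPolynomial.pderiv v (∑ u, MvPolynomial.C (y u) * MvPolynomial.X u) =
        MvPolynomial.C (y v) := by
      rw [map_sum, Finset.sum_eq_single v]
      · simp
      · intro u _ hu
        rw [MvPolynomial.pderiv_C_mul, MvPolynomial.pderiv_X_of_ne hu, mul_zero]
      · simp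
    rw [hQ, map_sub, map_sub, h2, MvPolynomial.eval_C] at h1
    linarith

/-- Polynomials that are nearly the indicator functions of disjoint compact sets. -/
lemma exists_indicator_poly {V S : Type*} [Fintype V] [Fintype S] [DecidableEq S]
    (K : S → Set (V → ℝ))
    (hK : ∀ s, IsCompact (K s)) (hd : ∀ s t, s ≠ t → Disjoint (K s) (K t)) (ε : ℝ) (hε : 0 < ε) :
    ∃ h : S → MvPolynomial V ℝ, ∀ s t, ∀ x ∈ K t,
      |MvPolynomial.eval x (h s) - if s = t then 1 else 0| < ε := by
  classical
  set X : Set (V → ℝ) := ⋃ s, K s with hX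
  have hXc : IsCompact X := isCompact_iUnion hK
  have : CompactSpace X := isCompact_iff_compactSpace.mp hXc
  let φ : MvPolynomial V ℝ →ₐ[ℝ] C(X, ℝ) :=
    MvPolynomial.aeval (fun v => ⟨fun x => x.1 v, (continuous_apply v).comp continuous_subtype_val⟩)
  have hφ : ∀ p (x : X), φ p x = MvPolynomial.eval x.1 p := by
    intro p x
    induction p using MvPolynomial.induction_on with
    | C a => simp [φ, Algebra.algebraMap_eq_smul_one]
    | add p q hp hq => simp [hp, hq]
    | mul_X p v hp => simp [hp]; left; simp [φ]
  have hsep : φ.range.SeparatesPoints := by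
    intro x y hxy
    obtain ⟨v, hv⟩ : ∃ v, x.1 v ≠ y.1 v := by
      by_contra! h
      exact hxy (Subtype.ext (funext h))
    refine ⟨_, ⟨φ (MvPolynomial.X v), ⟨MvPolynomial.X v, rfl⟩, rfl⟩, ?_⟩
    simpa [hφ] using hv
  have key : ∀ s, ∃ p : MvPolynomial V ℝ, ∀ t, ∀ x ∈ K t,
      |MvPolynomial.eval x p - if s = t then 1 else 0| < ε := by
    intro s
    have hclopen : IsClopen {x : X | x.1 ∈ K s} := by
      refine ⟨(hK s).isClosed.preimage continuous_subtype_val, ?_⟩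
      have : {x : X | x.1 ∈ K s} = (Subtype.val ⁻¹' (⋃ t ∈ {t | t ≠ s}, K t))ᶜ := by
        ext x
        simp only [Set.mem_ofPred_eq, mem_compl_iff, mem_preimage, mem_iUnion, not_exists]
        constructor
        · intro h t ht h'
          exact Set.disjoint_left.mp (hd t s ht) h' h
        · intro h
          obtain ⟨t, ht⟩ := mem_iUnion.mp x.2
          by_cases hts : t = s
          · exact hts ▸ ht
          · exact absurd ht (h t hts)
      rw [this, isOpen_compl_iff]
      exact (((Set.toFinite {t | t ≠ s}).isCompact_biUnion (fun t _ => hK t)).isClosed).preimage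
        continuous_subtype_val
    let f : C(X, ℝ) := ⟨fun x => if x.1 ∈ K s then 1 else 0, by
      apply Continuous.if
      · intro a ha
        have : frontier {x : X | x.1 ∈ K s} = ∅ := hclopen.frontier_eq
        rw [this] at ha; exact absurd ha (by simp)
      · exact continuous_const
      · exact continuous_const⟩
    obtain ⟨⟨g, p, rfl⟩, hg⟩ :=
      ContinuousMap.exists_mem_subalgebra_near_continuousMap_of_separatesPoints φ.range hsep f ε hε
    refine ⟨p, fun t x hx => ?_⟩
    have hxX : x ∈ X := mem_iUnion.mpr ⟨t, hx⟩
    rw [ContinuousMap.norm_lt_iff _ hε] at hg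
    have := hg ⟨x, hxX⟩
    have e : (if x ∈ K s then (1 : ℝ) else 0) = if s = t then 1 else 0 := by
      by_cases h : s = t
      · subst h; simp [hx]
      · have hn : x ∉ K s := fun h' => Set.disjoint_left.mp (hd s t h) h' hx
        simp [h, hn]
    rw [← e]
    simpa [f, hφ] using this
  choose h hh using key
  exact ⟨h, hh⟩

/-- Warren-type bound: few polynomials in few variables cannot shatter. -/
theorem warren_bound {V I : Type*} [Fintype V] [Fintype I] (F : I → MvPolynomial V ℝ)
    (d : ℕ) (hd : ∀ i, (F i).totalDegree ≤ d)
    (hs : ∀ s : I → Bool, ∃ x : V → ℝ, ∀ i, 0 < sg (s i) * MvPolynomial.eval x (F i)) :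
    2 ^ Fintype.card I ≤
      (Fintype.card V * (Fintype.card I * d + 2) + 1) ^ Fintype.card V := by
  classical
  by_contra! hlt
  choose w hw using hs
  obtain ⟨P, K, δ, hPd, hKc, hKpos, hδ, hcrit⟩ := exists_critical F w hw
  have hdisj : ∀ s t, s ≠ t → Disjoint (K s) (K t) := by
    intro s t hst
    rw [Set.disjoint_left]
    intro x hxs hxt
    obtain ⟨i, hi⟩ := Function.ne_iff.mp hst
    have h1 := hKpos s x hxs i
    have h2 := hKpos t x hxt i
    rcases hsi : s i <;> rcases hti : t i <;> simp_all [sg] <;> linarith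
  set M : ℕ := Fintype.card (I → Bool) with hM
  have hM0 : 0 < M := Fintype.card_pos
  have hM0' : (0 : ℝ) < M := by exact_mod_cast hM0
  obtain ⟨h, hh⟩ := exists_indicator_poly K hKc hdisj (1 / (2 * M)) (by positivity)
  have hPd' : ∀ v, (MvPolynomial.pderiv v P).totalDegree ≤ Fintype.card I * d + 2 := by
    intro v
    refine (totalDegree_pderiv_le' v P).trans (hPd.trans ?_)
    have : ∑ i, (F i).totalDegree ≤ ∑ _i : I, d := Finset.sum_le_sum fun i _ => hd i
    simp at this
    omega
  obtain ⟨R, hR0, hR⟩ := exists_relation h (fun v => MvPolynomial.pderiv v P) _ hPd' (by simpa using hlt)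
  obtain ⟨s0, hs0⟩ := Function.ne_iff.mp hR0
  obtain ⟨y, hy, hy0⟩ : ∃ y : V → ℝ, (∀ v, |y v| < δ) ∧ MvPolynomial.eval y (R s0) ≠ 0 := by
    by_contra! hcon
    apply hs0
    apply MvPolynomial.funext_set (fun _ : V => Set.Ioo (-δ) δ)
      (fun _ => Set.Ioo_infinite (by linarith))
    intro x hx
    rw [hcon x (fun v => abs_lt.mpr (hx v trivial))]
    simp
  choose x hxK hx using hcrit y hy
  have hrel : ∀ s, ∑ t, MvPolynomial.eval (x s) (h t) * MvPolynomial.eval y (R t) = 0 := by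
    intro s
    have := hR (x s)
    simp only [hx] at this
    exact this
  let A : Matrix (I → Bool) (I → Bool) ℝ := fun s t => MvPolynomial.eval (x s) (h t)
  have hdet : A.det ≠ 0 := by
    apply det_ne_zero_of_sum_row_lt_diag
    intro s
    have hM1 : (1 : ℝ) ≤ M := by exact_mod_cast hM0
    have h1 : ∑ t ∈ Finset.univ.erase s, ‖A s t‖ ≤ ∑ t ∈ Finset.univ.erase s, (1 / (2 * M) : ℝ) := by
      apply Finset.sum_le_sum
      intro t ht
      have := hh t s (x s) (hxK s)
      rw [if_neg (Finset.ne_of_mem_erase ht), sub_zero] at this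
      exact this.le
    have h2 : ∑ t ∈ Finset.univ.erase s, (1 / (2 * M) : ℝ) = 1 / 2 - 1 / (2 * M) := by
      rw [Finset.sum_const, Finset.card_erase_of_mem (Finset.mem_univ _), Finset.card_univ, ← hM,
        nsmul_eq_mul, Nat.cast_sub hM0]
      field_simp
      simp
    have h3 := hh s s (x s) (hxK s)
    rw [if_pos rfl, abs_lt] at h3
    have h4 : (1 / (2 * M) : ℝ) ≤ 1 / 2 := by
      rw [div_le_div_iff₀ (by positivity) (by norm_num)]; linarith
    have h5 : A s s ≤ ‖A s s‖ := Real.le_norm_self _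
    have h6 : A s s = MvPolynomial.eval (x s) (h s) := rfl
    have h7 : (0 : ℝ) < 1 / (2 * M) := by positivity
    linarith [h3.1]
  have hz : A.mulVec (fun t => MvPolynomial.eval y (R t)) = 0 := by
    funext s
    exact hrel s
  have := Matrix.eq_zero_of_mulVec_eq_zero hdet hz
  exact hy0 (congrFun this s0)

/-! ### Graphs as pseudolines -/

/-- The graph of a real function, as a subset of the plane. -/
def graphSet (f : ℝ → ℝ) : Set Plane := {p | p 1 = f (p 0)}

/-- The open region above a graph. -/
def aboveSet (f : ℝ → ℝ) : Set Plane := {p | f (p 0) < p 1}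

/-- The open region below a graph. -/
def belowSet (f : ℝ → ℝ) : Set Plane := {p | p 1 < f (p 0)}

/-- The shear moving the axis to the graph. -/
noncomputable def shear (f : ℝ → ℝ) (hf : Continuous f) : Plane ≃ₜ Plane where
  toFun p := !₂[p 0, p 1 + f (p 0)]
  invFun p := !₂[p 0, p 1 - f (p 0)]
  left_inv p := by ext i; fin_cases i <;> simp
  right_inv p := by ext i; fin_cases i <;> simp
  continuous_toFun := by
    refine (PiLp.continuous_toLp 2 _).comp (continuous_pi fun i => ?_)
    fin_cases i <;> simp <;> fun_prop
  continuous_invFun := by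
    refine (PiLp.continuous_toLp 2 _).comp (continuous_pi fun i => ?_)
    fin_cases i <;> simp <;> fun_prop

@[simp] lemma shear_zero (f : ℝ → ℝ) (hf : Continuous f) (p : Plane) : shear f hf p 0 = p 0 := by
  simp [shear]

@[simp] lemma shear_one (f : ℝ → ℝ) (hf : Continuous f) (p : Plane) :
    shear f hf p 1 = p 1 + f (p 0) := by
  simp [shear]

lemma graph_isPseudoline (f : ℝ → ℝ) (hf : Continuous f) : IsPseudoline (graphSet f) := by
  refine ⟨shear f hf, {p | p 1 = 0}, ⟨0, !₂[1, 0], ?_, ?_⟩, ?_⟩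
  · intro h
    have := congrArg (fun p : Plane => p 0) h
    simp at this
  · ext p
    constructor
    · intro hp
      refine ⟨p 0, ?_⟩
      have hp' : p 1 = 0 := hp
      ext i; fin_cases i <;> simp [hp']
    · rintro ⟨t, rfl⟩
      change _ = _
      simp
  · ext p
    constructor
    · intro hp
      have hp' : p 1 = f (p 0) := hp
      refine ⟨!₂[p 0, 0], by change _ = _; simp, ?_⟩
      ext i; fin_cases i <;> simp [hp']
    · rintro ⟨q, hq, rfl⟩
      have hq' : q 1 = 0 := hq
      change _ = _
      simp [hq']

lemma aboveSet_preconnected (f : ℝ → ℝ) (hf : Continuous f) : IsPreconnected (aboveSet f) := by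
  have h1 : Convex ℝ {p : Plane | 0 < p 1} := by
    intro p hp q hq a b ha hb hab
    have hp' : 0 < p 1 := hp
    have hq' : 0 < q 1 := hq
    change 0 < (a • p + b • q) 1
    simp only [PiLp.add_apply, PiLp.smul_apply, smul_eq_mul]
    rcases eq_or_lt_of_le ha with rfl | ha'
    · have : b = 1 := by linarith
      subst this; simpa using hq'
    · have := mul_pos ha' hp'
      have := mul_nonneg hb hq'.le
      linarith
  have h2 : aboveSet f = shear f hf '' {p : Plane | 0 < p 1} := by
    ext p
    constructor
    · intro hp
      have hp' : f (p 0) < p 1 := hp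
      refine ⟨(shear f hf).symm p, ?_, by simp⟩
      change 0 < (!₂[p 0, p 1 - f (p 0)] : Plane) 1
      simpa using hp'
    · rintro ⟨q, hq, rfl⟩
      have hq' : 0 < q 1 := hq
      change f _ < _
      simpa using hq'
  rw [h2]
  exact h1.isPreconnected.image _ (shear f hf).continuous.continuousOn

lemma belowSet_preconnected (f : ℝ → ℝ) (hf : Continuous f) : IsPreconnected (belowSet f) := by
  have h1 : Convex ℝ {p : Plane | p 1 < 0} := by
    intro p hp q hq a b ha hb hab
    have hp' : p 1 < 0 := hp
    have hq' : q 1 < 0 := hq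
    change (a • p + b • q) 1 < 0
    simp only [PiLp.add_apply, PiLp.smul_apply, smul_eq_mul]
    rcases eq_or_lt_of_le ha with rfl | ha'
    · have : b = 1 := by linarith
      subst this; simpa using hq'
    · have := mul_neg_of_pos_of_neg ha' hp'
      have := mul_nonpos_of_nonneg_of_nonpos hb hq'.le
      linarith
  have h2 : belowSet f = shear f hf '' {p : Plane | p 1 < 0} := by
    ext p
    constructor
    · intro hp
      have hp' : p 1 < f (p 0) := hp
      refine ⟨(shear f hf).symm p, ?_, by simp⟩
      change (!₂[p 0, p 1 - f (p 0)] : Plane) 1 < 0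
      simpa using hp'
    · rintro ⟨q, hq, rfl⟩
      have hq' : q 1 < 0 := hq
      change _ < f _
      simpa using hq'
  rw [h2]
  exact h1.isPreconnected.image _ (shear f hf).continuous.continuousOn

/-- `f` crosses `g` exactly once, from below to above. -/
def CrossUp (f g : ℝ → ℝ) : Prop :=
  ∃ x₀, f x₀ = g x₀ ∧ (∀ x < x₀, f x < g x) ∧ ∀ x > x₀, g x < f x

lemma CrossUp.unique {f g : ℝ → ℝ} (h : CrossUp f g) : {x | f x = g x}.Subsingleton := by
  obtain ⟨x₀, -, h1, h2⟩ := h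
  have : ∀ x, f x = g x → x = x₀ := by
    intro x hx
    rcases lt_trichotomy x x₀ with h | h | h
    · exact absurd hx (h1 x h).ne
    · exact h
    · exact absurd hx (h2 x h).ne'
  intro x hx y hy
  rw [this x hx, this y hy]

/-- Both functions are somewhere above one another. -/
lemma meets_components (f g : ℝ → ℝ) (hg : Continuous g) (h1 : ∃ x, f x < g x)
    (h2 : ∃ x, g x < f x) :
    ∀ x ∈ (graphSet g)ᶜ, (graphSet f ∩ connectedComponentIn (graphSet g)ᶜ x).Nonempty := by
  intro p hp
  obtain ⟨x1, hx1⟩ := h1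
  obtain ⟨x2, hx2⟩ := h2
  have hp' : p 1 ≠ g (p 0) := hp
  rcases lt_or_gt_of_ne hp' with h | h
  · have hsub : belowSet g ⊆ (graphSet g)ᶜ := by
      intro q hq hq'
      have a : q 1 < g (q 0) := hq
      have b : q 1 = g (q 0) := hq'
      linarith
    refine ⟨!₂[x1, f x1], by change _ = _; simp, ?_⟩
    apply (belowSet_preconnected g hg).subset_connectedComponentIn (x := p) h hsub
    change (!₂[x1, f x1] : Plane) 1 < g ((!₂[x1, f x1] : Plane) 0)
    simpa using hx1
  · have hsub : aboveSet g ⊆ (graphSet g)ᶜ := by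
      intro q hq hq'
      have a : g (q 0) < q 1 := hq
      have b : q 1 = g (q 0) := hq'
      linarith
    refine ⟨!₂[x2, f x2], by change _ = _; simp, ?_⟩
    apply (aboveSet_preconnected g hg).subset_connectedComponentIn (x := p) h hsub
    change g ((!₂[x2, f x2] : Plane) 0) < (!₂[x2, f x2] : Plane) 1
    simpa using hx2

lemma graphs_isArrangement {n : ℕ} (f : Fin n → ℝ → ℝ) (hf : ∀ i, Continuous (f i))
    (hc : ∀ i j, i ≠ j → CrossUp (f i) (f j) ∨ CrossUp (f j) (f i)) :
    IsArrangement (fun i => graphSet (f i)) := by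
  have hlt : ∀ i j, i ≠ j → ∃ x, f i x < f j x := by
    intro i j hij
    rcases hc i j hij with ⟨x, -, h1, h2⟩ | ⟨x, -, h1, h2⟩
    · exact ⟨x - 1, h1 _ (by linarith)⟩
    · exact ⟨x + 1, h2 _ (by linarith)⟩
  have huniq : ∀ i j, i ≠ j → ∀ x y, f i x = f j x → f i y = f j y → x = y := by
    intro i j hij x y hx hy
    rcases hc i j hij with h | h
    · exact h.unique hx hy
    · exact h.unique hx.symm hy.symm
  refine ⟨⟨?_, fun i => graph_isPseudoline _ (hf i), ?_, ?_⟩, ?_⟩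
  · intro i j hij
    by_contra hne
    obtain ⟨x, hx⟩ := hlt i j hne
    have h1 : (!₂[x, f i x] : Plane) ∈ graphSet (f i) := by change _ = _; simp
    simp only at hij
    rw [hij] at h1
    have h2 : (!₂[x, f i x] : Plane) 1 = f j ((!₂[x, f i x] : Plane) 0) := h1
    simp at h2
    linarith
  · rintro i j hij p ⟨hp1, hp2⟩ q ⟨hq1, hq2⟩
    have hp1' : p 1 = f i (p 0) := hp1
    have hp2' : p 1 = f j (p 0) := hp2
    have hq1' : q 1 = f i (q 0) := hq1
    have hq2' : q 1 = f j (q 0) := hq2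
    have h0 : p 0 = q 0 := huniq i j hij _ _ (hp1'.symm.trans hp2') (hq1'.symm.trans hq2')
    ext k; fin_cases k
    · exact h0
    · change p 1 = q 1
      rw [hp1', hq1', h0]
  · intro i j hij p hp
    exact ⟨hp, meets_components _ _ (hf j) (hlt i j hij) (hlt j i hij.symm),
      meets_components _ _ (hf i) (hlt j i hij.symm) (hlt i j hij)⟩
  · intro i j hij
    rcases hc i j hij with ⟨x, hx, -, -⟩ | ⟨x, hx, -, -⟩
    · exact ⟨!₂[x, f i x], by change _ = _; simp, by change _ = _; simpa using hx⟩
    · exact ⟨!₂[x, f i x], by change _ = _; simp, by change _ = _; simpa using hx.symm⟩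

/-! ### Circles -/

/-- Equation of a generalized circle. -/
noncomputable def circEq (k : Fin 4 → ℝ) (p : Plane) : ℝ :=
  k 0 * (p 0 ^ 2 + p 1 ^ 2) + k 1 * p 0 + k 2 * p 1 + k 3

lemma continuous_circEq (k : Fin 4 → ℝ) : Continuous (circEq k) := by
  unfold circEq; fun_prop

lemma circle_or_line_eq (γ : Set Plane) (h : IsCircle γ ∨ IsLine γ) :
    ∃ k : Fin 4 → ℝ, γ = {p | circEq k p = 0} ∧
      ∀ p ∈ γ, ∃ n : Plane, ∀ t : ℝ, (0 < t → 0 < circEq k (p + t • n)) ∧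
        (-1 < t → t < 0 → circEq k (p + t • n) < 0) := by
  rcases h with ⟨c, r, hr, rfl⟩ | ⟨a, u, hu, rfl⟩
  · have hmem : ∀ p : Plane, p ∈ Metric.sphere c r ↔ (p 0 - c 0) ^ 2 + (p 1 - c 1) ^ 2 = r ^ 2 := by
      intro p
      rw [Metric.mem_sphere, EuclideanSpace.dist_eq, Real.sqrt_eq_iff_eq_sq (by positivity) hr.le]
      simp [Fin.sum_univ_two, Real.dist_eq, sq_abs]
    refine ⟨![1, -2 * c 0, -2 * c 1, c 0 ^ 2 + c 1 ^ 2 - r ^ 2], ?_, ?_⟩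
    · ext p
      rw [hmem]
      simp only [Set.mem_ofPred_eq, circEq]
      simp
      constructor <;> intro h <;> linarith
    · intro p hp
      rw [hmem] at hp
      refine ⟨p - c, fun t => ?_⟩
      have e : circEq ![1, -2 * c 0, -2 * c 1, c 0 ^ 2 + c 1 ^ 2 - r ^ 2] (p + t • (p - c)) =
          t * (2 + t) * r ^ 2 := by
        simp [circEq]
        linear_combination (1 + t) ^ 2 * hp
      rw [e]
      constructor
      · intro ht; positivity
      · intro h1 h2
        have : t * (2 + t) < 0 := mul_neg_of_neg_of_pos h2 (by linarith)
        exact mul_neg_of_neg_of_pos this (by positivity)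
  · have hu2 : 0 < u 0 ^ 2 + u 1 ^ 2 := by
      by_contra! h
      apply hu
      have h0 : u 0 = 0 := by nlinarith [sq_nonneg (u 0), sq_nonneg (u 1)]
      have h1 : u 1 = 0 := by nlinarith [sq_nonneg (u 0), sq_nonneg (u 1)]
      ext i; fin_cases i <;> simp [h0, h1]
    have e : ∀ p : Plane, circEq ![0, u 1, -u 0, a 1 * u 0 - a 0 * u 1] p =
        (p 0 - a 0) * u 1 - (p 1 - a 1) * u 0 := by
      intro p; simp [circEq]; ring
    have hset : {p : Plane | ∃ t : ℝ, p = a + t • u} =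
        {p | circEq ![0, u 1, -u 0, a 1 * u 0 - a 0 * u 1] p = 0} := by
      ext p
      simp only [Set.mem_ofPred_eq, e]
      constructor
      · rintro ⟨t, rfl⟩
        simp; ring
      · intro h
        refine ⟨((p 0 - a 0) * u 0 + (p 1 - a 1) * u 1) / (u 0 ^ 2 + u 1 ^ 2), ?_⟩
        ext i; fin_cases i
        · simp; field_simp; linear_combination u 1 * h
        · simp; field_simp; linear_combination (- u 0) * h
    refine ⟨_, hset, ?_⟩
    intro p hp
    rw [hset] at hp
    simp only [Set.mem_ofPred_eq, e] at hp
    refine ⟨!₂[u 1, -u 0], fun t => ?_⟩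
    have e2 : circEq ![0, u 1, -u 0, a 1 * u 0 - a 0 * u 1] (p + t • !₂[u 1, -u 0]) =
        t * (u 0 ^ 2 + u 1 ^ 2) := by
      rw [e]; simp; linear_combination hp
    rw [e2]
    exact ⟨fun ht => by positivity, fun _ h2 => mul_neg_of_neg_of_pos h2 hu2⟩

lemma preconnected_sign {X : Type*} [TopologicalSpace X] {s : Set X} (hs : IsPreconnected s)
    {g : X → ℝ} (hg : Continuous g) (h0 : ∀ x ∈ s, g x ≠ 0) :
    (∀ x ∈ s, 0 < g x) ∨ (∀ x ∈ s, g x < 0) := by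
  by_contra! hcon
  obtain ⟨⟨x, hx, hx'⟩, ⟨y, hy, hy'⟩⟩ := hcon
  obtain ⟨z, hz, hz'⟩ := hs.intermediate_value hx hy hg.continuousOn ⟨hx', hy'⟩
  exact h0 z hz hz'

lemma realization_sign (c : Plane) (r : ℝ) (f : ℝ → ℝ) (hf : Continuous f)
    (γ : Set Plane) (hγ : IsCircle γ ∨ IsLine γ) (h : Plane ≃ₜ ↥(Metric.ball c r))
    (hL : Subtype.val '' (h '' graphSet f) = γ ∩ Metric.ball c r) :
    ∃ k : Fin 4 → ℝ, ∀ z : Plane, (f (z 0) < z 1 → 0 < circEq k (h z).1) ∧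
      (z 1 < f (z 0) → circEq k (h z).1 < 0) := by
  obtain ⟨k, hk, hdir⟩ := circle_or_line_eq γ hγ
  have hiff : ∀ z, circEq k (h z).1 = 0 ↔ z 1 = f (z 0) := by
    intro z
    constructor
    · intro hz
      have h1 : (h z).1 ∈ γ ∩ Metric.ball c r := ⟨by rw [hk]; exact hz, (h z).2⟩
      rw [← hL] at h1
      obtain ⟨w, ⟨z', hz', rfl⟩, hw⟩ := h1
      have : z' = z := h.injective (Subtype.ext hw)
      exact this ▸ hz'
    · intro hz
      have h1 : (h z).1 ∈ Subtype.val '' (h '' graphSet f) := ⟨_, ⟨z, hz, rfl⟩, rfl⟩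
      rw [hL, hk] at h1
      exact h1.1
  have hcont : Continuous (fun z => circEq k (h z).1) :=
    (continuous_circEq k).comp (continuous_subtype_val.comp h.continuous)
  have hA := preconnected_sign (aboveSet_preconnected f hf) hcont (by
    intro z hz h0
    have hz' : f (z 0) < z 1 := hz
    have := (hiff z).mp h0
    linarith)
  have hB := preconnected_sign (belowSet_preconnected f hf) hcont (by
    intro z hz h0
    have hz' : z 1 < f (z 0) := hz
    have := (hiff z).mp h0
    linarith)
  -- both signs occur
  have hboth : (∃ z, 0 < circEq k (h z).1) ∧ (∃ z, circEq k (h z).1 < 0) := by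
    set z0 : Plane := !₂[0, f 0] with hz0
    have hz0' : (h z0).1 ∈ γ := by
      rw [hk]; exact (hiff z0).mpr (by simp [hz0])
    obtain ⟨n, hn⟩ := hdir _ hz0'
    have hc2 : Continuous (fun t : ℝ => (h z0).1 + t • n) := by fun_prop
    have hev : ∀ᶠ t in nhds (0 : ℝ), (h z0).1 + t • n ∈ Metric.ball c r := by
      apply hc2.continuousAt.eventually_mem
      simpa using Metric.isOpen_ball.mem_nhds (h z0).2
    obtain ⟨δ, hδ, hball⟩ := Metric.eventually_nhds_iff.mp hev
    set t := min (δ / 2) (1 / 2) with ht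
    have ht0 : 0 < t := by positivity
    have ht1 : t < δ := lt_of_le_of_lt (min_le_left _ _) (by linarith)
    have ht2 : t < 1 := lt_of_le_of_lt (min_le_right _ _) (by norm_num)
    constructor
    · have hb := hball (y := t) (by rw [Real.dist_eq, sub_zero, abs_of_pos ht0]; exact ht1)
      refine ⟨h.symm ⟨_, hb⟩, ?_⟩
      rw [h.apply_symm_apply]
      exact (hn t).1 ht0
    · have hb := hball (y := -t) (by
        rw [Real.dist_eq, sub_zero, abs_neg, abs_of_pos ht0]; exact ht1)
      refine ⟨h.symm ⟨_, hb⟩, ?_⟩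
      rw [h.apply_symm_apply]
      exact (hn (-t)).2 (by linarith) (by linarith)
  obtain ⟨⟨zp, hzp⟩, ⟨zn, hzn⟩⟩ := hboth
  rcases hA with hA | hA <;> rcases hB with hB | hB
  · exfalso
    rcases lt_trichotomy (zn 1) (f (zn 0)) with h' | h' | h'
    · exact absurd (hB zn h') (by linarith)
    · exact absurd ((hiff zn).mpr h') (by linarith)
    · exact absurd (hA zn h') (by linarith)
  · exact ⟨k, fun z => ⟨fun hz => hA z hz, fun hz => hB z hz⟩⟩
  · have e : ∀ p, circEq (fun i => - k i) p = - circEq k p := by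
      intro p; simp only [circEq]; ring
    refine ⟨fun i => - k i, fun z => ⟨fun hz => ?_, fun hz => ?_⟩⟩
    · rw [e]; have := hA z hz; linarith
    · rw [e]; have := hB z hz; linarith
  · exfalso
    rcases lt_trichotomy (zp 1) (f (zp 0)) with h' | h' | h'
    · exact absurd (hB zp h') (by linarith)
    · exact absurd ((hiff zp).mpr h') (by linarith)
    · exact absurd (hA zp h') (by linarith)

/-! ### The perturbed grid of lines -/

/-- Generic vertical shifts remove all triple points. -/
lemma exists_generic_shift {ι : Type*} [Fintype ι] (f : ι → ℝ → ℝ) (τ : ℝ) (hτ : 0 < τ)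
    (hf : ∀ t : ι → ℝ, (∀ i, t i ∈ Set.Ioo 0 τ) → ∀ i j, i ≠ j →
      {x | f i x + t i = f j x + t j}.Subsingleton) :
    ∃ t : ι → ℝ, (∀ i, t i ∈ Set.Ioo 0 τ) ∧ ∀ i j k, i ≠ j → i ≠ k → j ≠ k →
      ∀ x y, ¬ (f i x + t i = y ∧ f j x + t j = y ∧ f k x + t k = y) := by
  classical
  have key : ∀ S : Finset ι, ∃ t : ι → ℝ, (∀ i, t i ∈ Set.Ioo 0 τ) ∧
      ∀ i ∈ S, ∀ j ∈ S, ∀ k ∈ S, i ≠ j → i ≠ k → j ≠ k →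
      ∀ x y, ¬ (f i x + t i = y ∧ f j x + t j = y ∧ f k x + t k = y) := by
    intro S
    induction S using Finset.induction_on with
    | empty => exact ⟨fun _ => τ / 2, fun _ => ⟨by linarith, by linarith⟩, by simp⟩
    | insert l S hl ih =>
      obtain ⟨t, ht, hS⟩ := ih
      set bad : Set ℝ := ⋃ p ∈ {p : ι × ι | p.1 ≠ p.2},
        (fun x => f p.1 x + t p.1 - f l x) '' {x | f p.1 x + t p.1 = f p.2 x + t p.2} with hbad
      have hfin : bad.Finite := by
        apply Set.Finite.biUnion (Set.toFinite _)
        intro p hp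
        exact ((hf t ht p.1 p.2 hp).finite).image _
      obtain ⟨t', ht', hnb⟩ := (Set.Ioo_infinite hτ).exists_notMem_finite hfin
      have hnot : ∀ j k, j ≠ k → ∀ x y,
          ¬ (f l x + t' = y ∧ f j x + t j = y ∧ f k x + t k = y) := by
        rintro j k hjk x y ⟨h1, h2, h3⟩
        apply hnb
        rw [hbad]
        refine Set.mem_biUnion (x := (j, k)) hjk ⟨x, ?_, ?_⟩
        · exact h2.trans h3.symm
        · simp only; linarith
      refine ⟨Function.update t l t', ?_, ?_⟩
      · intro i
        by_cases h : i = l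
        · subst h; simpa using ht'
        · simpa [h] using ht i
      · intro i hi j hj k hk hij hik hjk x y
        by_cases hil : i = l
        · subst hil
          simp only [Function.update_self, Function.update_of_ne hij.symm,
            Function.update_of_ne hik.symm]
          exact hnot j k hjk x y
        by_cases hjl : j = l
        · subst hjl
          simp only [Function.update_self, Function.update_of_ne hij,
            Function.update_of_ne hjk.symm]
          rintro ⟨h1, h2, h3⟩
          exact hnot i k hik x y ⟨h2, h1, h3⟩
        by_cases hkl : k = l
        · subst hkl
          simp only [Function.update_self, Function.update_of_ne hik,
            Function.update_of_ne hjk]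
          rintro ⟨h1, h2, h3⟩
          exact hnot i j hij x y ⟨h3, h1, h2⟩
        simp only [Function.update_of_ne hil, Function.update_of_ne hjl,
            Function.update_of_ne hkl]
        exact hS i (Finset.mem_of_mem_insert_of_ne hi hil) j (Finset.mem_of_mem_insert_of_ne hj hjl)
          k (Finset.mem_of_mem_insert_of_ne hk hkl) hij hik hjk x y
  obtain ⟨t, ht, h⟩ := key Finset.univ
  exact ⟨t, ht, fun i j k => h i (Finset.mem_univ _) j (Finset.mem_univ _) k (Finset.mem_univ _)⟩

/-- The tent function. -/
noncomputable def tent (x : ℝ) : ℝ := max 0 (1 - |x|)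

lemma continuous_tent : Continuous tent := by unfold tent; fun_prop

lemma tent_abs_le (x : ℝ) : |tent x| ≤ 1 := by
  unfold tent
  rw [abs_of_nonneg (le_max_left _ _)]
  exact max_le zero_le_one (by linarith [abs_nonneg x])

lemma tent_lip (x y : ℝ) : |tent x - tent y| ≤ |x - y| := by
  unfold tent
  have h1 := abs_max_sub_max_le_abs (1 - |x|) (1 - |y|) 0
  rw [max_comm _ (0 : ℝ), max_comm _ (0 : ℝ)] at h1
  refine h1.trans ?_
  have := abs_abs_sub_abs_le x y
  rw [show 1 - |x| - (1 - |y|) = -(|x| - |y|) by ring, abs_neg]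
  exact this

lemma tent_eq_zero (x : ℝ) (h : 1 ≤ |x|) : tent x = 0 := by
  unfold tent; exact max_eq_left (by linarith)

/-- The wiggle added to a line. -/
noncomputable def wig {m : ℕ} (s : Fin m → Bool) (x : ℝ) : ℝ :=
  ∑ i, -sg (s i) * tent (x - ((i : ℕ) + 1))

lemma sg_abs (b : Bool) : |sg b| = 1 := by cases b <;> simp [sg]

lemma continuous_wig {m : ℕ} (s : Fin m → Bool) : Continuous (wig s) := by
  unfold wig
  have := continuous_tent
  fun_prop

lemma wig_abs_le {m : ℕ} (s : Fin m → Bool) (x : ℝ) : |wig s x| ≤ m := by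
  unfold wig
  refine (Finset.abs_sum_le_sum_abs _ _).trans ?_
  refine (Finset.sum_le_card_nsmul _ _ 1 ?_).trans (by simp)
  intro i _
  rw [abs_mul, abs_neg, sg_abs, one_mul]
  exact tent_abs_le _

lemma wig_lip {m : ℕ} (s : Fin m → Bool) (x y : ℝ) : |wig s x - wig s y| ≤ m * |x - y| := by
  unfold wig
  rw [← Finset.sum_sub_distrib]
  refine (Finset.abs_sum_le_sum_abs _ _).trans ?_
  refine (Finset.sum_le_card_nsmul _ _ |x - y| ?_).trans (by simp)
  intro i _
  rw [← mul_sub, abs_mul, abs_neg, sg_abs, one_mul]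
  refine (tent_lip _ _).trans (le_of_eq ?_)
  congr 1; ring

lemma wig_neg {m : ℕ} (s : Fin m → Bool) (x : ℝ) (hx : x ≤ 0) : wig s x = 0 := by
  unfold wig
  apply Finset.sum_eq_zero
  intro i _
  rw [tent_eq_zero, mul_zero]
  have : (0 : ℝ) ≤ (i : ℕ) := Nat.cast_nonneg _
  rw [abs_of_neg (by linarith)]
  linarith

lemma wig_int {m : ℕ} (s : Fin m → Bool) (i : Fin m) : wig s ((i : ℕ) + 1) = - sg (s i) := by
  unfold wig
  rw [Finset.sum_eq_single i]
  · simp [tent]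
  · intro j _ hj
    rw [tent_eq_zero, mul_zero]
    have h1 : ((i : ℕ) : ℤ) - ((j : ℕ) : ℤ) ≠ 0 := by
      intro h; apply hj; apply Fin.ext; omega
    have h2 := Int.one_le_abs h1
    have h3 : (1 : ℝ) ≤ |(((i : ℕ) : ℤ) - ((j : ℕ) : ℤ) : ℤ)| := by exact_mod_cast h2
    push_cast at h3
    rw [show ((i : ℕ) : ℝ) + 1 - ((j : ℕ) + 1) = (i : ℕ) - (j : ℕ) by ring]
    exact h3
  · simp

/-- The wiggled line with slope `a` and intercept `b`. -/
noncomputable def lineFn (m : ℕ) (a b : ℕ) (s : Fin m → Bool) (x : ℝ) : ℝ :=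
  a * x + b + b / (4 * m ^ 2) * min x 0 + 1 / (8 * m) * wig s x

lemma continuous_lineFn (m a b : ℕ) (s : Fin m → Bool) : Continuous (lineFn m a b s) := by
  unfold lineFn
  have := continuous_wig s
  fun_prop

/-- Lines of different slope. -/
lemma crossUp_slope (m : ℕ) (hm : 0 < m) (a a' b b' : ℕ) (haa : a' < a) (hb : b < m ^ 2)
    (hb' : b' < m ^ 2) (s s' : Fin m → Bool) (t t' : ℝ) :
    CrossUp (fun x => lineFn m a b s x + t) (fun x => lineFn m a' b' s' x + t') := by
  have hm' : (0 : ℝ) < m := by exact_mod_cast hm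
  set F : ℝ → ℝ := fun x => (lineFn m a b s x + t) - (lineFn m a' b' s' x + t') with hF
  have hFc : Continuous F :=
    ((continuous_lineFn m a b s).add continuous_const).sub
      ((continuous_lineFn m a' b' s').add continuous_const)
  have hmono : ∀ x y, x ≤ y → (y - x) / 2 ≤ F y - F x := by
    intro x y hxy
    have h1 := abs_le.mp (wig_lip s y x)
    have h2 := abs_le.mp (wig_lip s' y x)
    rw [abs_of_nonneg (by linarith : (0:ℝ) ≤ y - x)] at h1 h2
    have haa' : (a' : ℝ) + 1 ≤ a := by exact_mod_cast haa
    have hmin0 : 0 ≤ min y 0 - min x 0 := by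
      have := min_le_min_right (0 : ℝ) hxy
      linarith
    have hmin1 : min y 0 - min x 0 ≤ y - x := by
      rcases le_total x 0 with h | h <;> rcases le_total y 0 with h' | h' <;>
        simp [h, h'] <;> linarith
    have hb1 : (0 : ℝ) ≤ b / (4 * m ^ 2) := by positivity
    have hb2 : (b' : ℝ) / (4 * m ^ 2) ≤ 1 / 4 := by
      rw [div_le_div_iff₀ (by positivity) (by norm_num)]
      have : (b' : ℝ) ≤ m ^ 2 := by exact_mod_cast hb'.le
      linarith
    have e : F y - F x = (a - a') * (y - x) + b / (4 * m ^ 2) * (min y 0 - min x 0)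
        - b' / (4 * m ^ 2) * (min y 0 - min x 0)
        + 1 / (8 * m) * (wig s y - wig s x) - 1 / (8 * m) * (wig s' y - wig s' x) := by
      simp only [hF, lineFn]; ring
    have h3 : -((y - x) / 8) ≤ 1 / (8 * m) * (wig s y - wig s x) := by
      have := mul_le_mul_of_nonneg_left h1.1 (by positivity : (0 : ℝ) ≤ 1 / (8 * m))
      refine le_trans (le_of_eq ?_) this
      field_simp
    have h4 : 1 / (8 * m) * (wig s' y - wig s' x) ≤ (y - x) / 8 := by
      have := mul_le_mul_of_nonneg_left h2.2 (by positivity : (0 : ℝ) ≤ 1 / (8 * m))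
      refine le_trans this (le_of_eq ?_)
      field_simp
    have h5 : y - x ≤ (a - a') * (y - x) := by nlinarith
    have h6 : 0 ≤ b / (4 * m ^ 2) * (min y 0 - min x 0) := mul_nonneg hb1 hmin0
    have h7 : b' / (4 * m ^ 2) * (min y 0 - min x 0) ≤ 1 / 4 * (y - x) :=
      mul_le_mul hb2 hmin1 hmin0 (by norm_num)
    rw [e]
    linarith
  obtain ⟨x₀, hx₀⟩ : ∃ x₀, F x₀ = 0 := by
    have h1 := hmono 0 (2 * |F 0|) (by positivity)
    have h2 := hmono (-(2 * |F 0|)) 0 (by simp)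
    have h3 := neg_abs_le (F 0)
    have h4 := le_abs_self (F 0)
    exact mem_range_of_exists_le_of_exists_ge hFc ⟨-(2 * |F 0|), by linarith⟩
      ⟨2 * |F 0|, by linarith⟩
  refine ⟨x₀, ?_, ?_, ?_⟩
  · have : F x₀ = 0 := hx₀
    simp only [hF] at this
    linarith
  · intro x hx
    have h1 := hmono x x₀ hx.le
    have : F x < 0 := by linarith
    simp only [hF] at this
    linarith
  · intro x hx
    have h1 := hmono x₀ x hx.le
    have : 0 < F x := by linarith
    simp only [hF] at this
    linarith

/-- Lines of the same slope. -/
lemma crossUp_parallel (m : ℕ) (hm : 0 < m) (a b b' : ℕ) (hbb : b' < b)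
    (s s' : Fin m → Bool) (t t' : ℝ) (ht : |t - t'| ≤ 1 / 4) :
    CrossUp (fun x => lineFn m a b s x + t) (fun x => lineFn m a b' s' x + t') := by
  have hm' : (0 : ℝ) < m := by exact_mod_cast hm
  have hbb' : (b' : ℝ) + 1 ≤ b := by exact_mod_cast hbb
  have ht' := abs_le.mp ht
  have hpos : ∀ x, 0 ≤ x → 0 < (lineFn m a b s x + t) - (lineFn m a b' s' x + t') := by
    intro x hx
    have h1 := abs_le.mp (wig_abs_le s x)
    have h2 := abs_le.mp (wig_abs_le s' x)
    have h3 : -(1 / 8) ≤ 1 / (8 * m) * wig s x := by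
      have := mul_le_mul_of_nonneg_left h1.1 (by positivity : (0 : ℝ) ≤ 1 / (8 * m))
      refine le_trans (le_of_eq ?_) this
      field_simp
    have h4 : 1 / (8 * m) * wig s' x ≤ 1 / 8 := by
      have := mul_le_mul_of_nonneg_left h2.2 (by positivity : (0 : ℝ) ≤ 1 / (8 * m))
      refine le_trans this (le_of_eq ?_)
      field_simp
    simp only [lineFn, min_eq_right hx]
    linarith [ht'.1, ht'.2]
  set c : ℝ := ((b : ℝ) - b') / (4 * m ^ 2) with hc
  have hc0 : 0 < c := by
    apply div_pos (by linarith) (by positivity)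
  have hneg : ∀ x, x ≤ 0 → (lineFn m a b s x + t) - (lineFn m a b' s' x + t') =
      c * x + (b - b' + (t - t')) := by
    intro x hx
    simp only [lineFn, min_eq_left hx, wig_neg _ x hx, hc]
    ring
  set x₀ : ℝ := -((b - b' + (t - t')) / c) with hx₀
  have hx₀0 : x₀ < 0 := by
    rw [hx₀, neg_lt_zero]
    exact div_pos (by linarith [ht'.1]) hc0
  have hcx : c * x₀ = -(b - b' + (t - t')) := by
    rw [hx₀]; field_simp
  refine ⟨x₀, ?_, ?_, ?_⟩
  · have := hneg x₀ hx₀0.le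
    simp only
    linarith
  · intro x hx
    have := hneg x (by linarith)
    have h2 := mul_lt_mul_of_pos_left hx hc0
    simp only
    linarith
  · intro x hx
    simp only
    rcases le_total x 0 with h | h
    · have := hneg x h
      have h2 := mul_lt_mul_of_pos_left hx hc0
      linarith
    · have := hpos x h
      linarith

/-- For every sign pattern there is a simple arrangement of graphs showing that pattern. -/
lemma exists_graphs (m : ℕ) (hm : 0 < m) (s : (Fin m × Fin (m ^ 2)) × Fin m → Bool) :
    ∃ f : Fin m × Fin (m ^ 2) → ℝ → ℝ, (∀ l, Continuous (f l)) ∧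
      (∀ l l', l ≠ l' → CrossUp (f l) (f l') ∨ CrossUp (f l') (f l)) ∧
      (∀ i j k, i ≠ j → i ≠ k → j ≠ k → ∀ x y, ¬ (f i x = y ∧ f j x = y ∧ f k x = y)) ∧
      (∀ (l : Fin m × Fin (m ^ 2)) (i : Fin m),
        (s (l, i) = true → f l ((i : ℕ) + 1) < ((l.1 : ℕ) * ((i : ℕ) + 1) + (l.2 : ℕ) : ℕ)) ∧
        (s (l, i) = false → ((l.1 : ℕ) * ((i : ℕ) + 1) + (l.2 : ℕ) : ℕ) < f l ((i : ℕ) + 1))) := by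
  have hm' : (1 : ℝ) ≤ m := by exact_mod_cast hm
  set f₀ : Fin m × Fin (m ^ 2) → ℝ → ℝ :=
    fun l => lineFn m l.1 l.2 (fun i => s (l, i)) with hf₀
  set τ : ℝ := 1 / (8 * m) with hτ
  have hτ0 : 0 < τ := by positivity
  have hτ1 : τ ≤ 1 / 8 := by
    rw [hτ, div_le_div_iff₀ (by positivity) (by norm_num)]; linarith
  have hcross : ∀ t : Fin m × Fin (m ^ 2) → ℝ, (∀ i, t i ∈ Set.Ioo 0 τ) → ∀ l l', l ≠ l' →
      CrossUp (fun x => f₀ l x + t l) (fun x => f₀ l' x + t l') ∨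
      CrossUp (fun x => f₀ l' x + t l') (fun x => f₀ l x + t l) := by
    intro t ht l l' hne
    have h1 : |t l - t l'| ≤ 1 / 4 := by
      rw [abs_le]; constructor <;> linarith [(ht l).1, (ht l).2, (ht l').1, (ht l').2]
    have h2 : |t l' - t l| ≤ 1 / 4 := by rw [abs_sub_comm]; exact h1
    rcases lt_trichotomy (l.1 : ℕ) (l'.1 : ℕ) with h | h | h
    · right
      exact crossUp_slope m hm _ _ _ _ h l'.2.2 l.2.2 _ _ _ _
    · rcases lt_trichotomy (l.2 : ℕ) (l'.2 : ℕ) with h' | h' | h'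
      · right
        simp only [hf₀, h]
        exact crossUp_parallel m hm _ _ _ h' _ _ _ _ h2
      · exact absurd (Prod.ext (Fin.ext h) (Fin.ext h')) hne
      · left
        simp only [hf₀, h]
        exact crossUp_parallel m hm _ _ _ h' _ _ _ _ h1
    · left
      exact crossUp_slope m hm _ _ _ _ h l.2.2 l'.2.2 _ _ _ _
  obtain ⟨t, ht, hgen⟩ := exists_generic_shift f₀ τ hτ0 (by
    intro t ht l l' hne
    rcases hcross t ht l l' hne with h | h
    · exact h.unique
    · intro x hx y hy
      exact h.unique (Eq.symm hx) (Eq.symm hy))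
  refine ⟨fun l x => f₀ l x + t l, ?_, hcross t ht, hgen, ?_⟩
  · intro l
    exact (continuous_lineFn _ _ _ _).add continuous_const
  · intro l i
    have hi : (0 : ℝ) ≤ ((i : ℕ) : ℝ) + 1 := by positivity
    have e : f₀ l ((i : ℕ) + 1) =
        ((l.1 : ℕ) * ((i : ℕ) + 1) + (l.2 : ℕ) : ℕ) - τ * sg (s (l, i)) := by
      simp only [hf₀, lineFn, min_eq_right hi, wig_int, hτ]
      push_cast
      ring
    simp only [e]
    constructor
    · intro hs
      simp only [hs, sg]
      simp only [if_true]
      linarith [(ht l).2]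
    · intro hs
      simp only [hs, sg]
      simp
      linarith [(ht l).1]

/-! ### Assembling -/

/-- Index of the grid point of line `l` at abscissa `i`. -/
def gridPt {m : ℕ} (q : (Fin m × Fin (m ^ 2)) × Fin m) : Fin m × Fin (2 * m ^ 2) :=
  (q.2, ⟨(q.1.1 : ℕ) * ((q.2 : ℕ) + 1) + (q.1.2 : ℕ), by
    have h1 := q.1.1.2
    have h2 := q.2.2
    have h3 := q.1.2.2
    have h4 : (q.1.1 : ℕ) * ((q.2 : ℕ) + 1) ≤ m * m := Nat.mul_le_mul h1.le h2
    nlinarith⟩)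

/-- Variables of the polynomial system: coordinates of points and coefficients of circles. -/
abbrev GVar (m : ℕ) := ((Fin m × Fin (2 * m ^ 2)) × Fin 2) ⊕ ((Fin m × Fin (m ^ 2)) × Fin 4)

/-- The polynomial expressing the position of a grid point relative to a circle. -/
noncomputable def incPoly {m : ℕ} (q : (Fin m × Fin (m ^ 2)) × Fin m) : MvPolynomial (GVar m) ℝ :=
  MvPolynomial.X (Sum.inr (q.1, 0)) *
    (MvPolynomial.X (Sum.inl (gridPt q, 0)) ^ 2 + MvPolynomial.X (Sum.inl (gridPt q, 1)) ^ 2) +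
  MvPolynomial.X (Sum.inr (q.1, 1)) * MvPolynomial.X (Sum.inl (gridPt q, 0)) +
  MvPolynomial.X (Sum.inr (q.1, 2)) * MvPolynomial.X (Sum.inl (gridPt q, 1)) +
  MvPolynomial.X (Sum.inr (q.1, 3))

lemma incPoly_totalDegree {m : ℕ} (q : (Fin m × Fin (m ^ 2)) × Fin m) :
    (incPoly q).totalDegree ≤ 3 := by
  unfold incPoly
  refine (MvPolynomial.totalDegree_add _ _).trans (max_le ?_ (by simp))
  refine (MvPolynomial.totalDegree_add _ _).trans (max_le ?_ ?_)
  · refine (MvPolynomial.totalDegree_add _ _).trans (max_le ?_ ?_)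
    · refine (MvPolynomial.totalDegree_mul _ _).trans ?_
      have : (MvPolynomial.X (Sum.inl (gridPt q, 0)) ^ 2 + MvPolynomial.X (Sum.inl (gridPt q, 1)) ^ 2
          : MvPolynomial (GVar m) ℝ).totalDegree ≤ 2 := by
        refine (MvPolynomial.totalDegree_add _ _).trans (max_le ?_ ?_) <;> simp
      rw [MvPolynomial.totalDegree_X]
      omega
    · refine (MvPolynomial.totalDegree_mul _ _).trans ?_
      simp
  · refine (MvPolynomial.totalDegree_mul _ _).trans ?_
    simp

lemma numeric_contradiction (m : ℕ) (hm : m = 1024)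
    (h : 2 ^ (m * m ^ 2 * m) ≤ (8 * m ^ 3 * (m * m ^ 2 * m * 3 + 2) + 1) ^ (8 * m ^ 3)) : False := by
  have h1 : 8 * m ^ 3 * (m * m ^ 2 * m * 3 + 2) + 1 ≤ 2 ^ 100 := by
    subst hm; norm_num
  have h2 : (8 * m ^ 3 * (m * m ^ 2 * m * 3 + 2) + 1) ^ (8 * m ^ 3) ≤ 2 ^ (100 * (8 * m ^ 3)) := by
    exact (Nat.pow_le_pow_left h1 _).trans (le_of_eq (pow_mul 2 100 _).symm)
  have h3 : 2 ^ (m * m ^ 2 * m) ≤ 2 ^ (100 * (8 * m ^ 3)) := h.trans h2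
  have h4 := (Nat.pow_le_pow_iff_right (by norm_num : 1 < 2)).mp h3
  subst hm
  norm_num at h4

/-- There exists a simple (non-weak) pseudoline arrangement that
is not realizable by circular arcs: no homeomorphism from the plane onto an open
disk carries the pseudolines to the intersections with the disk of a family of
circles and straight lines. -/
theorem exists_arrangement_not_realizable_by_circles :
    ∃ (n : ℕ) (L : Fin n → Set Plane),
      IsArrangement L ∧ IsSimple L ∧
      ¬ ∃ (c : Plane) (r : ℝ), 0 < r ∧
          ∃ γ : Fin n → Set Plane,
            (∀ i, IsCircle (γ i) ∨ IsLine (γ i)) ∧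
            ∃ h : Plane ≃ₜ ↥(Metric.ball c r),
              ∀ i, Subtype.val '' (h '' L i) = γ i ∩ Metric.ball c r := by
  by_contra hcon
  push Not at hcon
  obtain ⟨m, hm⟩ : ∃ m : ℕ, m = 1024 := ⟨_, rfl⟩
  have hm0 : 0 < m := by omega
  have hall : ∀ s : (Fin m × Fin (m ^ 2)) × Fin m → Bool, ∃ x : GVar m → ℝ,
      ∀ q, 0 < sg (s q) * MvPolynomial.eval x (incPoly q) := by
    intro s
    obtain ⟨f, hfc, hfx, hfs, hfv⟩ := exists_graphs m hm0 s
    let e := (Fintype.equivFin (Fin m × Fin (m ^ 2))).symm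
    obtain ⟨c, r, hr, γ, hγ, h, hh⟩ := hcon _ (fun i => graphSet (f (e i)))
      (graphs_isArrangement (fun i => f (e i)) (fun i => hfc _)
        (fun i j hij => hfx _ _ (fun h => hij (e.injective h))))
      (by
        intro p i j k hi hj hk
        by_contra! hne
        obtain ⟨h1, h2, h3⟩ := hne
        have hi' : p 1 = f (e i) (p 0) := hi
        have hj' : p 1 = f (e j) (p 0) := hj
        have hk' : p 1 = f (e k) (p 0) := hk
        exact hfs (e i) (e j) (e k) (fun h => h1 (e.injective h)) (fun h => h2 (e.injective h))
          (fun h => h3 (e.injective h)) (p 0) (p 1) ⟨hi'.symm, hj'.symm, hk'.symm⟩)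
    have hk : ∀ l, ∃ k : Fin 4 → ℝ, ∀ z : Plane, (f l (z 0) < z 1 → 0 < circEq k (h z).1) ∧
        (z 1 < f l (z 0) → circEq k (h z).1 < 0) := by
      intro l
      have := realization_sign c r (f l) (hfc l) (γ (e.symm l)) (hγ _) h (by
        have := hh (e.symm l)
        simpa using this)
      exact this
    choose k hk using hk
    let P : Fin m × Fin (2 * m ^ 2) → Plane := fun w => !₂[((w.1 : ℕ) : ℝ) + 1, ((w.2 : ℕ) : ℝ)]
    refine ⟨Sum.elim (fun w => (h (P w.1)).1 w.2) (fun w => k w.1 w.2), ?_⟩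
    rintro ⟨l, i⟩
    have he : MvPolynomial.eval (Sum.elim (fun w => (h (P w.1)).1 w.2) (fun w => k w.1 w.2))
        (incPoly (l, i)) = circEq (k l) (h (P (gridPt (l, i)))).1 := by
      simp [incPoly, circEq]
    rw [he]
    have hP0 : P (gridPt (l, i)) 0 = ((i : ℕ) : ℝ) + 1 := by simp [P, gridPt]
    have hP1 : P (gridPt (l, i)) 1 = ((l.1 : ℕ) * ((i : ℕ) + 1) + (l.2 : ℕ) : ℕ) := by
      simp [P, gridPt]
    have hz := hk l (P (gridPt (l, i)))
    rw [hP0, hP1] at hz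
    obtain ⟨hv1, hv2⟩ := hfv l i
    rcases hsq : s (l, i) with _ | _
    · have := hz.2 (hv2 hsq)
      simp only [sg]
      simp
      exact this
    · have := hz.1 (hv1 hsq)
      simp only [sg]
      simp
      exact this
  have hb := warren_bound (incPoly (m := m)) 3 incPoly_totalDegree hall
  have hcI : Fintype.card ((Fin m × Fin (m ^ 2)) × Fin m) = m * m ^ 2 * m := by
    simp only [Fintype.card_prod, Fintype.card_fin]
  have hcV : Fintype.card (GVar m) = 8 * m ^ 3 := by
    simp only [Fintype.card_sum, Fintype.card_prod, Fintype.card_fin]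
    ring
  rw [hcI, hcV] at hb
  exact numeric_contradiction m hm hb
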